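/- arXiv:1103.3581 — 2 statements merged into one kernel-verified Lean document; each statement's English description precedes it below -/
import Mathlib

section
/- Let Q be a finite abelian group whose cardinality is a power of 3, and let φ : alternatingGroup (Fin 6) →* MulAut Q be an action of the alternating group on 6 letters on Q. Suppose some element s ∈ alternatingGroup (Fin 6) of order 5 acts fixed point freely: for every x ∈ Q, if φ(s)(x) = x then x = 1. Then Q is elementary abelian (x^3 = 1 for every x ∈ Q), and moreover every φ-invariant subgroup of Q has a φ-invariant direct complement in Q. -/
/-- The alternating group of degree six. -/
abbrev A6 := alternatingGroup (Fin 6)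

/-- An even permutation from a table and the table of its inverse. -/
def mkA (f g : Fin 6 → Fin 6) (h1 : ∀ i, g (f i) = i := by decide)
    (h2 : ∀ i, f (g i) = i := by decide)
    (h3 : Equiv.Perm.sign (⟨f, g, h1, h2⟩ : Equiv.Perm (Fin 6)) = 1 := by decide) : A6 :=
  ⟨⟨f, g, h1, h2⟩, h3⟩

def a6i : A6 := mkA ![0,1,3,2,5,4] ![0,1,3,2,5,4]
def a6j : A6 := mkA ![0,1,4,5,2,3] ![0,1,4,5,2,3]
def a6t : A6 := mkA ![0,1,3,4,2,5] ![0,1,4,2,3,5]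

/-- Every element of order five has vanishing norm. -/
def NormZero (M : Type*) [AddCommGroup M] [DistribMulAction A6 M] : Prop :=
  ∀ s : A6, s ^ 5 = 1 → s ≠ 1 → ∀ x : M,
    x + s • x + s • s • x + s • s • s • x + s • s • s • s • x = 0

theorem pent {M : Type*} [AddCommGroup M] [DistribMulAction A6 M] (hN : NormZero M)
    (h0 h1 h2 h3 h4 : A6)
    (h : h1 ≠ h0 ∧ h1 * h0⁻¹ * h1 = h2 ∧ h1 * h0⁻¹ * h2 = h3 ∧ h1 * h0⁻¹ * h3 = h4 ∧
      h1 * h0⁻¹ * h4 = h0) (x : M) :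
    h0 • x + h1 • x + h2 • x + h3 • x + h4 • x = 0 := by
  obtain ⟨hne, a2, a3, a4, a5⟩ := h
  have a1 : h1 * h0⁻¹ * h0 = h1 := by group
  have hs : (h1 * h0⁻¹) ^ 5 = 1 := by
    have : (h1 * h0⁻¹) ^ 5 * h0 = h0 := by
      simp only [pow_succ, pow_zero, one_mul]
      rw [mul_assoc, a1, mul_assoc, a2, mul_assoc, a3, mul_assoc, a4, a5]
    exact mul_eq_right.1 this
  have := hN (h1 * h0⁻¹) hs (fun hh => hne (mul_inv_eq_one.1 hh)) (h0 • x)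
  rw [smul_smul _ h0, a1, smul_smul _ h1, a2, smul_smul _ h2, a3, smul_smul _ h3, a4] at this
  exact this

def q12345 : A6 := mkA ![0,1,2,3,4,5] ![0,1,2,3,4,5]
def q12534 : A6 := mkA ![0,1,2,5,3,4] ![0,1,2,4,5,3]
def q21354 : A6 := mkA ![0,2,1,3,5,4] ![0,2,1,3,5,4]
def q21435 : A6 := mkA ![0,2,1,4,3,5] ![0,2,1,4,3,5]
def q21543 : A6 := mkA ![0,2,1,5,4,3] ![0,2,1,5,4,3]
def q23145 : A6 := mkA ![0,2,3,1,4,5] ![0,3,1,2,4,5]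
def q23451 : A6 := mkA ![0,2,3,4,5,1] ![0,5,1,2,3,4]
def q23514 : A6 := mkA ![0,2,3,5,1,4] ![0,4,1,2,5,3]
def q24153 : A6 := mkA ![0,2,4,1,5,3] ![0,3,1,5,2,4]
def q24531 : A6 := mkA ![0,2,4,5,3,1] ![0,5,1,4,2,3]
def q25134 : A6 := mkA ![0,2,5,1,3,4] ![0,3,1,4,5,2]
def q25341 : A6 := mkA ![0,2,5,3,4,1] ![0,5,1,3,4,2]
def q25413 : A6 := mkA ![0,2,5,4,1,3] ![0,4,1,5,3,2]
def q31245 : A6 := mkA ![0,3,1,2,4,5] ![0,2,3,1,4,5]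
def q31452 : A6 := mkA ![0,3,1,4,5,2] ![0,2,5,1,3,4]
def q31524 : A6 := mkA ![0,3,1,5,2,4] ![0,2,4,1,5,3]
def q34125 : A6 := mkA ![0,3,4,1,2,5] ![0,3,4,1,2,5]
def q34251 : A6 := mkA ![0,3,4,2,5,1] ![0,5,3,1,2,4]
def q34512 : A6 := mkA ![0,3,4,5,1,2] ![0,4,5,1,2,3]
def q35142 : A6 := mkA ![0,3,5,1,4,2] ![0,3,5,1,4,2]
def q35214 : A6 := mkA ![0,3,5,2,1,4] ![0,4,3,1,5,2]
def q35421 : A6 := mkA ![0,3,5,4,2,1] ![0,5,4,1,3,2]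
def q41253 : A6 := mkA ![0,4,1,2,5,3] ![0,2,3,5,1,4]
def q41325 : A6 := mkA ![0,4,1,3,2,5] ![0,2,4,3,1,5]
def q41532 : A6 := mkA ![0,4,1,5,3,2] ![0,2,5,4,1,3]
def q43152 : A6 := mkA ![0,4,3,1,5,2] ![0,3,5,2,1,4]
def q43215 : A6 := mkA ![0,4,3,2,1,5] ![0,4,3,2,1,5]
def q43521 : A6 := mkA ![0,4,3,5,2,1] ![0,5,4,2,1,3]
def q45123 : A6 := mkA ![0,4,5,1,2,3] ![0,3,4,5,1,2]
def q45231 : A6 := mkA ![0,4,5,2,3,1] ![0,5,3,4,1,2]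
def q45312 : A6 := mkA ![0,4,5,3,1,2] ![0,4,5,3,1,2]
def q51234 : A6 := mkA ![0,5,1,2,3,4] ![0,2,3,4,5,1]
def q51342 : A6 := mkA ![0,5,1,3,4,2] ![0,2,5,3,4,1]
def q51423 : A6 := mkA ![0,5,1,4,2,3] ![0,2,4,5,3,1]
def q53124 : A6 := mkA ![0,5,3,1,2,4] ![0,3,4,2,5,1]
def q53412 : A6 := mkA ![0,5,3,4,1,2] ![0,4,5,2,3,1]
def q54132 : A6 := mkA ![0,5,4,1,3,2] ![0,3,5,4,2,1]
def q54213 : A6 := mkA ![0,5,4,2,1,3] ![0,4,3,5,2,1]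

theorem t_fix {M : Type*} [AddCommGroup M] [DistribMulAction A6 M]
    (hN : NormZero M) (h2 : ∀ z : M, (2:ℤ) • z = 0 → z = 0) (x : M)
    (hv1 : a6i • x = x) (hv2 : a6j • x = x) : a6t • x = x := by
  have hv3 : (a6i * a6j) • x = x := by rw [mul_smul, hv2, hv1]

  have eq23145 : q23145 • x = (q21354 • x) := by
    rw [show q23145 = q21354 * a6i by decide +kernel, mul_smul, hv1]
  have eq34251 : q34251 • x = (q31524 • x) := by
    rw [show q34251 = q31524 * (a6i * a6j) by decide +kernel, mul_smul, hv3]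
  have eq45312 : q45312 • x = (q41253 • x) := by
    rw [show q45312 = q41253 * a6j by decide +kernel, mul_smul, hv2]
  have r0 := pent hN q12534 q23145 q34251 q45312 q51423 (by decide +kernel) x
  rw [eq23145, eq34251, eq45312] at r0
  have eq23514 : q23514 • x = (q21435 • x) := by
    rw [show q23514 = q21435 * a6j by decide +kernel, mul_smul, hv2]
  have eq35421 : q35421 • x = (q31245 • x) := by
    rw [show q35421 = q31245 * (a6i * a6j) by decide +kernel, mul_smul, hv3]
  have eq54132 : q54132 • x = (q51423 • x) := by
    rw [show q54132 = q51423 * a6i by decide +kernel, mul_smul, hv1]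
  have r1 := pent hN q12345 q23514 q35421 q54132 q41253 (by decide +kernel) x
  rw [eq23514, eq35421, eq54132] at r1
  have eq24153 : q24153 • x = (q21435 • x) := by
    rw [show q24153 = q21435 * a6i by decide +kernel, mul_smul, hv1]
  have eq43215 : q43215 • x = (q41532 • x) := by
    rw [show q43215 = q41532 * a6j by decide +kernel, mul_smul, hv2]
  have r2 := pent hN q12534 q24153 q43215 q35421 q51342 (by decide +kernel) x
  rw [eq24153, eq43215, eq35421] at r2
  have eq25413 : q25413 • x = (q21354 • x) := by
    rw [show q25413 = q21354 * a6j by decide +kernel, mul_smul, hv2]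
  have eq53124 : q53124 • x = (q51342 • x) := by
    rw [show q53124 = q51342 * a6i by decide +kernel, mul_smul, hv1]
  have r3 := pent hN q12345 q25413 q53124 q34251 q41532 (by decide +kernel) x
  rw [eq25413, eq53124, eq34251] at r3
  have et : a6t • x = q12534 • x := by
    rw [show a6t = q12534 * a6j by decide +kernel, mul_smul, hv2]
  have e1 : x = q12345 • x := by rw [show q12345 = 1 by decide +kernel, one_smul]
  rw [et]; refine Eq.symm (sub_eq_zero.1 (h2 _ ?_))
  nth_rw 1 [e1]
  linear_combination (norm := abel) (-1:ℤ) • r0 + (1:ℤ) • r1 + (-1:ℤ) • r2 + (1:ℤ) • r3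

theorem lam_mem {M : Type*} [AddCommGroup M] [DistribMulAction A6 M]
    (hN : NormZero M) (S : AddSubgroup M) (x : M)
    (hv1 : a6i • x = x) (hv2 : a6j • x = -x)
    (hV : ∀ c u h0 h1 h2 h3 : A6, (h0 = c * u ∧ h1 = c * a6i * u ∧ h2 = c * a6j * u ∧ h3 = c * (a6i * a6j) * u) →
      h0 • x + h1 • x + h2 • x + h3 • x ∈ S) : (10:ℤ) • x ∈ S := by
  have hv3 : (a6i * a6j) • x = -x := by rw [mul_smul, hv2, smul_neg, hv1]

  have eq23451 : q23451 • x = -(q21543 • x) := by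
    rw [show q23451 = q21543 * (a6i * a6j) by decide +kernel, mul_smul, hv3]; exact smul_neg _ _
  have eq34512 : q34512 • x = -(q31245 • x) := by
    rw [show q34512 = q31245 * a6j by decide +kernel, mul_smul, hv2]; exact smul_neg _ _
  have eq45123 : q45123 • x = (q41532 • x) := by
    rw [show q45123 = q41532 * a6i by decide +kernel, mul_smul, hv1]
  have r0 := pent hN q12345 q23451 q34512 q45123 q51234 (by decide +kernel) x
  rw [eq23451, eq34512, eq45123] at r0
  have eq35142 : q35142 • x = (q31524 • x) := by
    rw [show q35142 = q31524 * a6i by decide +kernel, mul_smul, hv1]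
  have eq54213 : q54213 • x = -(q51342 • x) := by
    rw [show q54213 = q51342 * a6j by decide +kernel, mul_smul, hv2]; exact smul_neg _ _
  have r1 := pent hN q12534 q23451 q35142 q54213 q41325 (by decide +kernel) x
  rw [eq23451, eq35142, eq54213] at r1
  have eq24153 : q24153 • x = (q21435 • x) := by
    rw [show q24153 = q21435 * a6i by decide +kernel, mul_smul, hv1]
  have eq45231 : q45231 • x = -(q41325 • x) := by
    rw [show q45231 = q41325 * (a6i * a6j) by decide +kernel, mul_smul, hv3]; exact smul_neg _ _
  have eq53412 : q53412 • x = -(q51234 • x) := by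
    rw [show q53412 = q51234 * a6j by decide +kernel, mul_smul, hv2]; exact smul_neg _ _
  have r2 := pent hN q12345 q24153 q45231 q53412 q31524 (by decide +kernel) x
  rw [eq24153, eq45231, eq53412] at r2
  have eq24531 : q24531 • x = -(q21354 • x) := by
    rw [show q24531 = q21354 * (a6i * a6j) by decide +kernel, mul_smul, hv3]; exact smul_neg _ _
  have eq43152 : q43152 • x = (q41325 • x) := by
    rw [show q43152 = q41325 * a6i by decide +kernel, mul_smul, hv1]
  have eq35214 : q35214 • x = -(q31452 • x) := by
    rw [show q35214 = q31452 * a6j by decide +kernel, mul_smul, hv2]; exact smul_neg _ _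
  have r3 := pent hN q12345 q24531 q43152 q35214 q51423 (by decide +kernel) x
  rw [eq24531, eq43152, eq35214] at r3
  have eq25134 : q25134 • x = (q21543 • x) := by
    rw [show q25134 = q21543 * a6i by decide +kernel, mul_smul, hv1]
  have eq43521 : q43521 • x = -(q41253 • x) := by
    rw [show q43521 = q41253 * (a6i * a6j) by decide +kernel, mul_smul, hv3]; exact smul_neg _ _
  have r4 := pent hN q12345 q25134 q54213 q43521 q31452 (by decide +kernel) x
  rw [eq25134, eq54213, eq43521] at r4
  have eq25341 : q25341 • x = -(q21435 • x) := by
    rw [show q25341 = q21435 * (a6i * a6j) by decide +kernel, mul_smul, hv3]; exact smul_neg _ _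
  have eq34125 : q34125 • x = (q31452 • x) := by
    rw [show q34125 = q31452 * a6i by decide +kernel, mul_smul, hv1]
  have r5 := pent hN q12534 q25341 q53412 q34125 q41253 (by decide +kernel) x
  rw [eq25341, eq53412, eq34125] at r5
  have w0 := hV q12345 q21354 q21354 q31245 q41532 q51423 (by decide +kernel)
  have eq53124 : q53124 • x = (q51342 • x) := by
    rw [show q53124 = q51342 * a6i by decide +kernel, mul_smul, hv1]
  have w1 := hV q41253 q23451 q12534 q21354 q53124 q35214 (by decide +kernel)
  rw [eq53124, eq35214] at w1
  have w2 := hV q51234 q23145 q12534 q21543 q34512 q43521 (by decide +kernel)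
  rw [eq34512, eq43521] at w2
  have e1 : x = q12345 • x := by rw [show q12345 = 1 by decide +kernel, one_smul]
  have key : (10:ℤ) • x = (-2:ℤ) • (q21354 • x + q31245 • x + q41532 • x + q51423 • x) + (4:ℤ) • (q12534 • x + q21354 • x + q51342 • x + -(q31452 • x)) + (-4:ℤ) • (q12534 • x + q21543 • x + -(q31245 • x) + -(q41253 • x)) := by
    nth_rw 1 [e1]
    linear_combination (norm := abel) (2:ℤ) • r0 + (-1:ℤ) • r1 + (1:ℤ) • r2 + (2:ℤ) • r3 + (5:ℤ) • r4 + (1:ℤ) • r5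
  rw [key]
  exact S.add_mem (S.add_mem (S.zsmul_mem w0 _) (S.zsmul_mem w1 _)) (S.zsmul_mem w2 _)

/-- A five-cycle fixing the first point, used to see double transitivity. -/
def a6c : A6 := mkA ![0,2,3,4,5,1] ![0,5,1,2,3,4]
def a6w : A6 := mkA ![1,0,3,2,4,5] ![1,0,3,2,4,5]

theorem trans2_aux : ∀ p q : Fin 6, p ≠ q → ∃ e : Fin 2, ∃ k l : Fin 5,
    (a6c ^ k.1 * a6w ^ e.1 * a6c ^ l.1).1 0 = p ∧ (a6c ^ k.1 * a6w ^ e.1 * a6c ^ l.1).1 1 = q := by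
  decide +kernel

theorem trans2 (p q : Fin 6) (h : p ≠ q) : ∃ g : A6, g.1 0 = p ∧ g.1 1 = q := by
  obtain ⟨e, k, l, h⟩ := trans2_aux p q h
  exact ⟨_, h⟩

theorem stab2_aux : ∀ g : Equiv.Perm (Fin 6), g 0 = 0 → g 1 = 1 → Equiv.Perm.sign g = 1 →
    ∃ k : Fin 3, ∃ l m : Fin 2, g = (a6t ^ k.1 * (a6i ^ l.1 * a6j ^ m.1)).1 := by
  decide +kernel

theorem stab2 (g : A6) (h0 : g.1 0 = 0) (h1 : g.1 1 = 1) :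
    ∃ k : Fin 3, ∃ l m : Fin 2, g = a6t ^ k.1 * (a6i ^ l.1 * a6j ^ m.1) := by
  obtain ⟨k, l, m, h⟩ := stab2_aux g.1 h0 h1 g.2
  exact ⟨k, l, m, Subtype.ext h⟩

section main
variable {M : Type*} [AddCommGroup M] [DistribMulAction A6 M]

/-- The norm of the four-group. -/
def NV (x : M) : M := x + a6i • x + a6j • x + (a6i * a6j) • x

theorem NV_add (x y : M) : NV (x + y) = NV x + NV y := by
  simp only [NV, smul_add]; abel

theorem NV_neg (x : M) : NV (-x) = - NV x := by
  simp only [NV, smul_neg]; abel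

theorem NV_zero : NV (0 : M) = 0 := by simp [NV]

theorem NV_i (x : M) : a6i • NV x = NV x := by
  simp only [NV, smul_add, smul_smul, show a6i * a6i = 1 by decide +kernel,
    show a6i * (a6i * a6j) = a6j by decide +kernel, one_smul]; abel

theorem NV_j (x : M) : a6j • NV x = NV x := by
  simp only [NV, smul_add, smul_smul, show a6j * a6j = 1 by decide +kernel,
    show a6j * (a6i * a6j) = a6i by decide +kernel,
    show a6j * a6i = a6i * a6j by decide +kernel, one_smul]; abel

/-- The eigenprojection for the character with kernel generated by `a6i`. -/
def NL (x : M) : M := x + a6i • x - a6j • x - (a6i * a6j) • x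

theorem NL_mem (hN : NormZero M) (S : AddSubgroup M) (hS : ∀ g : A6, ∀ x ∈ S, g • x ∈ S)
    (x : M) (hx : ∀ g : A6, NV (g • x) ∈ S) : (10:ℤ) • NL x ∈ S := by
  apply lam_mem hN
  · simp only [NL, smul_add, smul_sub, smul_smul, show a6i * a6i = 1 by decide +kernel,
      show a6i * (a6i * a6j) = a6j by decide +kernel, one_smul]; abel
  · simp only [NL, smul_add, smul_sub, smul_smul, show a6j * a6j = 1 by decide +kernel,
      show a6j * (a6i * a6j) = a6i by decide +kernel,
      show a6j * a6i = a6i * a6j by decide +kernel, one_smul]; abel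
  · rintro c u _ _ _ _ ⟨rfl, rfl, rfl, rfl⟩
    have : (c * u) • NL x + (c * a6i * u) • NL x + (c * a6j * u) • NL x
        + (c * (a6i * a6j) * u) • NL x = c • (NV (u • x) + NV ((u * a6i) • x)
          + -NV ((u * a6j) • x) + -NV ((u * (a6i * a6j)) • x)) := by
      simp only [mul_smul, NV, NL, smul_add, smul_sub, smul_neg]; abel
    rw [this]
    exact hS _ _ (S.add_mem (S.add_mem (S.add_mem (hx _) (hx _)) (S.neg_mem (hx _)))
      (S.neg_mem (hx _)))

theorem gen_mem (hN : NormZero M) (S : AddSubgroup M) (hS : ∀ g : A6, ∀ x ∈ S, g • x ∈ S)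
    (x : M) (hx : ∀ g : A6, NV (g • x) ∈ S) : (40:ℤ) • x ∈ S := by
  have h0 : NV x ∈ S := by simpa using hx 1
  have h (g : A6) : g⁻¹ • (10:ℤ) • NL (g • x) ∈ S :=
    hS _ _ (NL_mem hN S hS _ fun k => by rw [smul_smul]; exact hx _)
  have e : (40:ℤ) • x = (10:ℤ) • NV x + (1:A6)⁻¹ • (10:ℤ) • NL ((1:A6) • x)
      + a6t⁻¹ • (10:ℤ) • NL (a6t • x) + (a6t*a6t)⁻¹ • (10:ℤ) • NL ((a6t*a6t) • x) := by
    simp only [smul_comm _ (10:ℤ), NL, NV, smul_add, smul_sub, smul_smul, inv_one, one_mul,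
      inv_mul_cancel, one_smul,
      mul_one,
      show a6t⁻¹ * (a6i * a6t) = a6j by decide +kernel,
      show a6t⁻¹ * (a6j * a6t) = a6i * a6j by decide +kernel,
      show a6t⁻¹ * (a6i * a6j * a6t) = a6i by decide +kernel,
      show (a6t*a6t)⁻¹ * (a6i * (a6t*a6t)) = a6i * a6j by decide +kernel,
      show (a6t*a6t)⁻¹ * (a6j * (a6t*a6t)) = a6i by decide +kernel,
      show (a6t*a6t)⁻¹ * (a6i * a6j * (a6t*a6t)) = a6j by decide +kernel]
    abel
  rw [e]
  exact S.add_mem (S.add_mem (S.add_mem (S.zsmul_mem h0 _) (h _)) (h _)) (h _)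

theorem stab_fix (hN : NormZero M) (h2 : ∀ z : M, (2:ℤ) • z = 0 → z = 0) (x : M)
    (hi : a6i • x = x) (hj : a6j • x = x) (g : A6) (h0 : g.1 0 = 0) (h1 : g.1 1 = 1) :
    g • x = x := by
  have ht := t_fix hN h2 x hi hj
  have hp (u : A6) (hu : u • x = x) (n : ℕ) : u ^ n • x = x := by
    induction n with
    | zero => simp
    | succ n ih => rw [pow_succ, mul_smul, hu, ih]
  obtain ⟨k, l, m, rfl⟩ := stab2 g h0 h1
  rw [mul_smul, mul_smul, hp _ hj, hp _ hi, hp _ ht]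

theorem exists_pairs (hN : NormZero M) (h2 : ∀ z : M, (2:ℤ) • z = 0 → z = 0) (x : M)
    (hi : a6i • x = x) (hj : a6j • x = x) :
    ∃ y : Fin 6 → Fin 6 → M, y 0 1 = x ∧
      ∀ (g : A6) (p q : Fin 6), p ≠ q → g • y p q = y (g.1 p) (g.1 q) := by
  choose r hr0 hr1 using trans2
  have key (g : A6) (p q : Fin 6) (hpq : p ≠ q) (h0 : g.1 0 = p) (h1 : g.1 1 = q) :
      g • x = r p q hpq • x := by
    have := stab_fix hN h2 x hi hj ((r p q hpq)⁻¹ * g)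
      (by
        change (r p q hpq).1⁻¹ (g.1 0) = 0
        rw [h0, Equiv.Perm.inv_eq_iff_eq, hr0])
      (by
        change (r p q hpq).1⁻¹ (g.1 1) = 1
        rw [h1, Equiv.Perm.inv_eq_iff_eq, hr1])
    rw [mul_smul, inv_smul_eq_iff] at this
    exact this
  refine ⟨fun p q => if h : p ≠ q then r p q h • x else 0, ?_, ?_⟩
  · have h01 : (0 : Fin 6) ≠ 1 := by decide
    simp only [dif_pos h01]
    rw [← key 1 0 1 h01 rfl rfl, one_smul]
  · intro g p q hpq
    have hg : g.1 p ≠ g.1 q := fun h => hpq (g.1.injective h)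
    simp only [dif_pos hpq, dif_pos hg]
    rw [smul_smul]
    apply key
    · change g.1 ((r p q hpq).1 0) = _
      rw [hr0]
    · change g.1 ((r p q hpq).1 1) = _
      rw [hr1]

/-- The five-cycle through five given points. -/
theorem exists_five (a b c d e f : Fin 6) (h : [a, b, c, d, e, f].Nodup) :
    ∃ s : A6, s ^ 5 = 1 ∧ s ≠ 1 ∧ s.1 a = b ∧ s.1 b = c ∧ s.1 c = d ∧ s.1 d = e ∧ s.1 e = a
      ∧ s.1 f = f := by
  have hn := h
  simp only [List.nodup_cons, List.mem_cons, List.not_mem_nil, or_false, not_or,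
    not_false_eq_true, List.nodup_nil, and_true] at h
  obtain ⟨⟨ab, ac, ad, ae, af⟩, ⟨bc, bd, be, bf⟩, ⟨cd, ce, cf⟩, ⟨de, df⟩, ef⟩ := h
  let σ : Equiv.Perm (Fin 6) :=
    Equiv.swap a b * Equiv.swap b c * Equiv.swap c d * Equiv.swap d e
  have hσ : σ ∈ alternatingGroup (Fin 6) := by
    rw [Equiv.Perm.mem_alternatingGroup]
    simp [σ, Equiv.Perm.sign_swap, ab, bc, cd, de]
  have sa : σ a = b := by
    simp [σ, Equiv.swap_apply_def, ab, ac, ad, ae]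
  have sb : σ b = c := by
    simp [σ, Equiv.swap_apply_def, bc, bd, be, Ne.symm ab, Ne.symm ac, Ne.symm bc]
  have sc : σ c = d := by
    simp [σ, Equiv.swap_apply_def, cd, ce, Ne.symm ad, Ne.symm bd, Ne.symm cd]
  have sd : σ d = e := by
    simp [σ, Equiv.swap_apply_def, Ne.symm ae, Ne.symm be, Ne.symm ce, Ne.symm de]
  have se : σ e = a := by
    simp [σ, Equiv.swap_apply_def]
  have sf : σ f = f := by
    simp [σ, Equiv.swap_apply_def, Ne.symm af, Ne.symm bf, Ne.symm cf, Ne.symm df, Ne.symm ef]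
  refine ⟨⟨σ, hσ⟩, ?_, ?_, sa, sb, sc, sd, se, sf⟩
  · apply Subtype.ext
    change σ ^ 5 = 1
    ext1 z
    have hz : z ∈ [a, b, c, d, e, f] := by
      have h1 : [a, b, c, d, e, f].toFinset = Finset.univ := by
        apply Finset.eq_univ_of_card
        rw [List.toFinset_card_of_nodup hn]; rfl
      rw [← List.mem_toFinset, h1]; exact Finset.mem_univ _
    simp only [List.mem_cons, List.not_mem_nil, or_false] at hz
    simp only [pow_succ, pow_zero, one_mul, Equiv.Perm.mul_apply, Equiv.Perm.one_apply]
    rcases hz with rfl | rfl | rfl | rfl | rfl | rfl <;> simp only [sa, sb, sc, sd, se, sf]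
  · intro h1
    have : σ = 1 := congrArg Subtype.val h1
    rw [this] at sa
    exact ab sa

theorem pair_relations (hN : NormZero M) (h2 : ∀ z : M, (2:ℤ) • z = 0 → z = 0)
    (h5 : ∀ z : M, (5:ℤ) • z = 0 → z = 0)
    (y : Fin 6 → Fin 6 → M)
    (hy : ∀ (g : A6) (p q : Fin 6), p ≠ q → g • y p q = y (g.1 p) (g.1 q))
    (a b c d e f : Fin 6) (h : [a, b, c, d, e, f].Nodup) :
    y a b = - y b a ∧ y a b + y b c = y a c ∧
      y a b + y a c + y a d + y a e + y a f = 0 ∧ (3:ℤ) • y a b = 0 := by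
  have P : ∀ a b c d e f : Fin 6, [a, b, c, d, e, f].Nodup →
      y a b + y b c + y c d + y d e + y e a = 0 := by
    intro a b c d e f h
    obtain ⟨s, s5, s1, sa, sb, sc, sd, se, sf⟩ := exists_five a b c d e f h
    simp only [List.nodup_cons, List.mem_cons, List.not_mem_nil, or_false, not_or] at h
    have := hN s s5 s1 (y a b)
    rwa [hy s a b (by tauto), sa, sb, hy s b c (by tauto), sb, sc, hy s c d (by tauto), sc, sd,
      hy s d e (by tauto), sd, se] at this
  have T : ∀ a b c d e f : Fin 6, [a, b, c, d, e, f].Nodup →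
      y f a + y f b + y f c + y f d + y f e = 0 := by
    intro a b c d e f h
    obtain ⟨s, s5, s1, sa, sb, sc, sd, se, sf⟩ := exists_five a b c d e f h
    simp only [List.nodup_cons, List.mem_cons, List.not_mem_nil, or_false, not_or] at h
    have := hN s s5 s1 (y f a)
    rwa [hy s f a (by tauto), sa, sf, hy s f b (by tauto), sb, sf, hy s f c (by tauto), sc, sf,
      hy s f d (by tauto), sd, sf] at this
  have X : ∀ a b c d e f : Fin 6, [a, b, c, d, e, f].Nodup →
      y a b + y e a = y f b + y e f := by
    intro a b c d e f h
    have h' : [f, b, c, d, e, a].Nodup := by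
      simp only [List.nodup_cons, List.mem_cons, List.not_mem_nil, or_false, not_or] at h ⊢
      grind
    linear_combination (norm := abel) P a b c d e f h - P f b c d e a h'
  have E : ∀ a b c d e f : Fin 6, [a, b, c, d, e, f].Nodup →
      y a b + y b a = y a c + y c a := by
    intro a b c d e f h
    have h1 : [c, a, e, f, d, b].Nodup := by
      simp only [List.nodup_cons, List.mem_cons, List.not_mem_nil, or_false, not_or] at h ⊢
      grind
    have h2 : [c, f, a, e, d, b].Nodup := by
      simp only [List.nodup_cons, List.mem_cons, List.not_mem_nil, or_false, not_or] at h ⊢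
      grind
    have h3 : [c, f, e, d, a, b].Nodup := by
      simp only [List.nodup_cons, List.mem_cons, List.not_mem_nil, or_false, not_or] at h ⊢
      grind
    linear_combination (norm := abel) X c f a e d b h2 - X c f e d a b h3 - X c a e f d b h1
  have N : ∀ a b c d e f : Fin 6, [a, b, c, d, e, f].Nodup → y a b + y b a = 0 := by
    intro a b c d e f h
    have g1 : [e, d, a, b, c, f].Nodup ∧ [e, d, c, b, a, f].Nodup ∧ [b, a, c, d, e, f].Nodup
        ∧ [d, c, e, a, b, f].Nodup ∧ [c, b, d, a, e, f].Nodup := by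
      simp only [List.nodup_cons, List.mem_cons, List.not_mem_nil, or_false, not_or] at h ⊢
      grind
    obtain ⟨k1, k5, k6, k8, k9⟩ := g1
    apply h5
    linear_combination (norm := abel) P a b c d e f h + P e d c b a f k5
      + (4:ℤ) • E b a c d e f k6 + (3:ℤ) • E c b d a e f k9
      + (2:ℤ) • E d c e a b f k8 + E e d a b c f k1
  have Q : ∀ a b c d e f : Fin 6, [a, b, c, d, e, f].Nodup → y a b + y b c = y a c := by
    intro a b c d e f h
    have g1 : [a, d, e, b, c, f].Nodup ∧ [a, d, b, f, c, e].Nodup ∧ [a, b, d, f, c, e].Nodup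
        ∧ [d, e, a, b, c, f].Nodup ∧ [a, c, b, d, e, f].Nodup := by
      simp only [List.nodup_cons, List.mem_cons, List.not_mem_nil, or_false, not_or] at h ⊢
      grind
    obtain ⟨k1, k2, k3, k4, k5⟩ := g1
    linear_combination (norm := abel) P a d e b c f k1 - X a d b f c e k2 + X a b d f c e k3
      - N d e a b c f k4 - N a c b d e f k5
  have g1 : [b, c, d, e, f, a].Nodup ∧ [a, c, d, e, f, b].Nodup ∧ [a, b, d, c, e, f].Nodup
      ∧ [a, b, e, c, d, f].Nodup ∧ [a, b, f, c, d, e].Nodup := by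
    simp only [List.nodup_cons, List.mem_cons, List.not_mem_nil, or_false, not_or] at h ⊢
    grind
  obtain ⟨k1, k2, k3, k4, k5⟩ := g1
  refine ⟨eq_neg_of_add_eq_zero_left (N a b c d e f h), Q a b c d e f h, T b c d e f a k1, ?_⟩
  apply h2
  linear_combination (norm := abel) T b c d e f a k1 - T a c d e f b k2 + Q a b c d e f h
    + Q a b d c e f k3 + Q a b e c d f k4 + Q a b f c d e k5 + N a b c d e f h

theorem three_smul_fixed (hN : NormZero M) (h2 : ∀ z : M, (2:ℤ) • z = 0 → z = 0)
    (h5 : ∀ z : M, (5:ℤ) • z = 0 → z = 0) (x : M)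
    (hi : a6i • x = x) (hj : a6j • x = x) : (3:ℤ) • x = 0 := by
  obtain ⟨y, rfl, hy⟩ := exists_pairs hN h2 x hi hj
  exact (pair_relations hN h2 h5 y hy 0 1 2 3 4 5 (by decide)).2.2.2

theorem three_smul (hN : NormZero M) (h2 : ∀ z : M, (2:ℤ) • z = 0 → z = 0)
    (h5 : ∀ z : M, (5:ℤ) • z = 0 → z = 0) (x : M) : (3:ℤ) • x = 0 := by
  let S : AddSubgroup M := (zsmulAddGroupHom (3:ℤ)).ker
  have hS (z : M) : z ∈ S ↔ (3:ℤ) • z = 0 := Iff.rfl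
  have := gen_mem hN S (fun g z hz => by rw [hS] at *; rw [smul_comm, hz, smul_zero]) x
    (fun g => (hS _).2 (three_smul_fixed hN h2 h5 _ (NV_i _) (NV_j _)))
  rw [hS] at this
  apply h2; apply h2; apply h2; apply h5
  rw [← this]
  simp only [smul_smul]; norm_num

theorem NV_orbit (hN : NormZero M) (h2 : ∀ z : M, (2:ℤ) • z = 0 → z = 0)
    (h5 : ∀ z : M, (5:ℤ) • z = 0 → z = 0) (x : M)
    (hi : a6i • x = x) (hj : a6j • x = x) (g : A6) : ∃ n : ℤ, NV (g • x) = n • x := by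
  obtain ⟨y, rfl, hy⟩ := exists_pairs hN h2 x hi hj
  have R := pair_relations hN h2 h5 y hy
  have k0 : ∀ q : Fin 6, 0 ≠ q → ∃ n : ℤ, NV (y 0 q) = n • y 0 1 := by
    intro q hq
    by_cases h1 : q = 1
    · subst h1
      refine ⟨4, ?_⟩
      rw [NV, mul_smul, hj, hi]; abel
    · have hr := (R 0 1 2 3 4 5 (by decide)).2.2.1
      refine ⟨-1, ?_⟩
      have e : NV (y 0 q) = y 0 2 + y 0 3 + y 0 4 + y 0 5 := by
        rw [NV, hy _ _ _ hq, hy _ _ _ hq, hy _ _ _ hq]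
        have hc : q = 2 ∨ q = 3 ∨ q = 4 ∨ q = 5 := by revert hq h1; revert q; decide
        rcases hc with rfl | rfl | rfl | rfl
        · change y 0 2 + y 0 3 + y 0 4 + y 0 5 = _; abel
        · change y 0 3 + y 0 2 + y 0 5 + y 0 4 = _; abel
        · change y 0 4 + y 0 5 + y 0 2 + y 0 3 = _; abel
        · change y 0 5 + y 0 4 + y 0 3 + y 0 2 = _; abel
      rw [e]
      linear_combination (norm := abel) hr
  have ext6 : ∀ p q : Fin 6, 0 ≠ p → 0 ≠ q → p ≠ q →
      ∃ c d e : Fin 6, [p, 0, q, c, d, e].Nodup := by decide +kernel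
  have ext6' : ∀ p : Fin 6, 0 ≠ p → ∃ b c d e : Fin 6, [p, 0, b, c, d, e].Nodup := by
    decide +kernel
  rw [hy g 0 1 (by decide)]
  have hpq : g.1 0 ≠ g.1 1 := fun h => absurd (g.1.injective h) (by decide)
  generalize g.1 0 = p at hpq ⊢
  generalize g.1 1 = q at hpq ⊢
  by_cases hp : 0 = p
  · subst hp; exact k0 q hpq
  obtain ⟨n, hn⟩ := k0 p hp
  by_cases hq : 0 = q
  · subst hq
    obtain ⟨b, c, d, e, h⟩ := ext6' p hp
    refine ⟨-n, ?_⟩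
    rw [(R p 0 b c d e h).1, NV_neg, hn, neg_smul]
  obtain ⟨m, hm⟩ := k0 q hq
  obtain ⟨c, d, e, h⟩ := ext6 p q hp hq hpq
  obtain ⟨r1, r2, -⟩ := R p 0 q c d e h
  refine ⟨-n + m, ?_⟩
  rw [← r2, NV_add, hm, r1, NV_neg, hn, add_smul, neg_smul]

theorem exists_compl (hN : NormZero M) (h2 : ∀ z : M, (2:ℤ) • z = 0 → z = 0)
    (h5 : ∀ z : M, (5:ℤ) • z = 0 → z = 0) (U : AddSubgroup M)
    (hU : ∀ g : A6, ∀ u ∈ U, g • u ∈ U) :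
    ∃ W : AddSubgroup M, (∀ g : A6, ∀ w ∈ W, g • w ∈ W) ∧ U ⊓ W = ⊥ ∧ U ⊔ W = ⊤ := by
  have h3 := three_smul hN h2 h5
  have h40 (z : M) : (40:ℤ) • z = z := by
    have : (40:ℤ) • z = (13:ℤ) • (3:ℤ) • z + z := by abel
    rw [this, h3, smul_zero, zero_add]
  let A : AddSubgroup M :=
    { carrier := {x | a6i • x = x ∧ a6j • x = x}
      zero_mem' := ⟨smul_zero _, smul_zero _⟩
      add_mem' := fun {a b} ha hb => ⟨by rw [smul_add, ha.1, hb.1], by rw [smul_add, ha.2, hb.2]⟩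
      neg_mem' := fun {a} ha => ⟨by rw [smul_neg, ha.1], by rw [smul_neg, ha.2]⟩ }
  have hA (x : M) : NV x ∈ A := ⟨NV_i x, NV_j x⟩
  have hcomp : ∃ B : AddSubgroup M, B ≤ A ∧ U ⊓ B = ⊥ ∧ A ≤ U ⊔ B := by
    have : Fact (Nat.Prime 3) := ⟨by norm_num⟩
    let _ : Module (ZMod 3) M := AddCommGroup.zmodModule (n := 3) (fun x => by
      have := h3 x
      exact_mod_cast this)
    let F := AddSubgroup.toZModSubmodule 3 (M := M)
    obtain ⟨C, hC⟩ := exists_isCompl (F (U ⊓ A))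
    refine ⟨F.symm C ⊓ A, inf_le_right, ?_, ?_⟩
    · rw [eq_bot_iff]
      rintro z ⟨hz1, hz2, hz3⟩
      have : z ∈ F (U ⊓ A) ⊓ C := ⟨⟨hz1, hz3⟩, hz2⟩
      rw [hC.inf_eq_bot] at this
      exact this
    · intro z hz
      have : z ∈ F (U ⊓ A) ⊔ C := by rw [hC.sup_eq_top]; trivial
      obtain ⟨u, hu, c, hc, rfl⟩ := Submodule.mem_sup.1 this
      have hu' : u ∈ U ⊓ A := hu
      refine AddSubgroup.mem_sup.2 ⟨u, hu'.1, c, ⟨hc, ?_⟩, rfl⟩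
      have := A.sub_mem hz hu'.2
      rwa [add_sub_cancel_left] at this
  obtain ⟨B, hBA, hUB, hAUB⟩ := hcomp
  let W : AddSubgroup M := AddSubgroup.closure {w | ∃ g : A6, ∃ b ∈ B, w = g • b}
  have hW : ∀ g : A6, ∀ w ∈ W, g • w ∈ W := by
    intro g w hw
    induction hw using AddSubgroup.closure_induction with
    | mem w hw =>
      obtain ⟨k, b, hb, rfl⟩ := hw
      exact AddSubgroup.subset_closure ⟨g * k, b, hb, by rw [mul_smul]⟩
    | zero => rw [smul_zero]; exact W.zero_mem
    | add a b _ _ ha hb => rw [smul_add]; exact W.add_mem ha hb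
    | neg a _ ha => rw [smul_neg]; exact W.neg_mem ha
  have hNW : ∀ w ∈ W, NV w ∈ B := by
    intro w hw
    induction hw using AddSubgroup.closure_induction with
    | mem w hw =>
      obtain ⟨k, b, hb, rfl⟩ := hw
      obtain ⟨n, hn⟩ := NV_orbit hN h2 h5 b (hBA hb).1 (hBA hb).2 k
      rw [hn]; exact B.zsmul_mem hb n
    | zero => rw [NV_zero]; exact B.zero_mem
    | add a b _ _ ha hb => rw [NV_add]; exact B.add_mem ha hb
    | neg a _ ha => rw [NV_neg]; exact B.neg_mem ha
  have hBW : B ≤ W := fun b hb => AddSubgroup.subset_closure ⟨1, b, hb, by rw [one_smul]⟩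
  refine ⟨W, hW, ?_, ?_⟩
  · rw [eq_bot_iff]
    rintro z ⟨hzU, hzW⟩
    rw [← h40 z]
    refine gen_mem hN ⊥ (fun g x hx => ?_) z (fun g => ?_)
    · rw [AddSubgroup.mem_bot] at *; rw [hx, smul_zero]
    · rw [← hUB]
      refine ⟨?_, hNW _ (hW g z hzW)⟩
      have hg := hU g z hzU
      exact U.add_mem (U.add_mem (U.add_mem hg (hU _ _ hg)) (hU _ _ hg)) (hU _ _ hg)
  · rw [eq_top_iff]
    intro z _
    rw [← h40 z]
    refine gen_mem hN _ (fun g x hx => ?_) z (fun g => ?_)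
    · obtain ⟨u, hu, w, hw, rfl⟩ := AddSubgroup.mem_sup.1 hx
      rw [smul_add]
      exact AddSubgroup.mem_sup.2 ⟨_, hU g u hu, _, hW g w hw, rfl⟩
    · exact sup_le_sup_left hBW U (hAUB (hA _))

/-- Elements of order five have vanishing norm as soon as one of them is fixed point free. -/
theorem normZero_of_fpf (s : A6) (hs : orderOf s = 5) (hfpf : ∀ x : M, s • x = x → x = 0) :
    NormZero M := by
  intro r hr5 hr1 x
  have : Fact (Nat.Prime 5) := ⟨by norm_num⟩
  have hro : orderOf r = 5 := orderOf_eq_prime hr5 hr1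
  have hcard : Nat.card A6 = 360 := by
    rw [nat_card_alternatingGroup, Nat.card_eq_fintype_card, Fintype.card_fin]; rfl
  have hf : (Nat.card A6).factorization 5 = 1 := by
    rw [hcard]
    have h : (360 : ℕ) = 5 * 72 := by norm_num
    rw [h, Nat.factorization_mul (by norm_num) (by norm_num), Finsupp.add_apply,
      Nat.Prime.factorization_self (by norm_num), Nat.factorization_eq_zero_of_not_dvd (by norm_num)]
  let P : Sylow 5 A6 := Sylow.ofCard (Subgroup.zpowers s) (by rw [hf, Nat.card_zpowers, hs, pow_one])
  let R : Sylow 5 A6 := Sylow.ofCard (Subgroup.zpowers r) (by rw [hf, Nat.card_zpowers, hro, pow_one])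
  obtain ⟨g, hg⟩ := MulAction.exists_smul_eq A6 R P
  have hsP : s ∈ g • R := by
    rw [hg]; exact Subgroup.mem_zpowers s
  have hsR : ∃ n : ℤ, g * r ^ n * g⁻¹ = s := by
    rw [← SetLike.mem_coe, Sylow.coe_smul, Set.mem_smul_set] at hsP
    obtain ⟨z, hz, hzs⟩ := hsP
    obtain ⟨n, rfl⟩ := Subgroup.mem_zpowers_iff.1 (show z ∈ Subgroup.zpowers r from hz)
    exact ⟨n, hzs⟩
  obtain ⟨n, hn⟩ := hsR
  have fix (z : M) (hz : r • z = z) : z = 0 := by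
    have h1 : r ^ n • z = z := by
      have : r ∈ MulAction.stabilizer A6 z := hz
      exact (MulAction.stabilizer A6 z).zpow_mem this n
    have h2 : g • z = 0 := by
      apply hfpf
      rw [← hn, smul_smul, inv_mul_cancel_right, mul_smul, h1]
    exact (smul_eq_zero_iff_eq g).1 h2
  apply fix
  have h5 : r • r • r • r • r • x = x := by
    simp only [smul_smul]
    rw [show r * (r * (r * (r * r))) = r ^ 5 by simp only [pow_succ, pow_zero, one_mul, mul_assoc], hr5, one_smul]
  simp only [smul_add, h5]
  abel
end main

theorem alt6_on_abelian_three_group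
    (Q : Type*) [CommGroup Q] [Finite Q]
    (hQcard : ∃ k : ℕ, Nat.card Q = 3 ^ k)
    (φ : alternatingGroup (Fin 6) →* MulAut Q)
    (s : alternatingGroup (Fin 6)) (hs : orderOf s = 5)
    (hfpf : ∀ x : Q, φ s x = x → x = 1) :
    (∀ x : Q, x ^ 3 = 1) ∧
      ∀ U : Subgroup Q, (∀ g : alternatingGroup (Fin 6), ∀ u ∈ U, φ g u ∈ U) →
        ∃ W : Subgroup Q, (∀ g : alternatingGroup (Fin 6), ∀ w ∈ W, φ g w ∈ W) ∧
          U ⊓ W = ⊥ ∧ U ⊔ W = ⊤ := by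
  obtain ⟨k, hk⟩ := hQcard
  let _ : DistribMulAction A6 (Additive Q) :=
    { smul := fun g x => Additive.ofMul (φ g x.toMul)
      one_smul := fun x => by
        change Additive.ofMul (φ 1 x.toMul) = x
        rw [map_one]; rfl
      mul_smul := fun g h x => by
        change Additive.ofMul (φ (g * h) x.toMul) = Additive.ofMul (φ g (φ h x.toMul))
        rw [map_mul]; rfl
      smul_zero := fun g => by
        change Additive.ofMul (φ g 1) = 0
        rw [map_one]; rfl
      smul_add := fun g x y => by
        change Additive.ofMul (φ g (x.toMul * y.toMul)) = _
        rw [map_mul]; rfl }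
  have hN : NormZero (Additive Q) := normZero_of_fpf s hs hfpf
  have hcop (n : ℕ) (hn : Nat.Coprime n 3) (z : Additive Q) (hz : (n : ℤ) • z = 0) : z = 0 := by
    have h1 : addOrderOf z ∣ n := addOrderOf_dvd_of_nsmul_eq_zero (by exact_mod_cast hz)
    have h2 : addOrderOf z ∣ 3 ^ k := by
      rw [← hk]; exact addOrderOf_dvd_natCard z
    have h3 : addOrderOf z ∣ 1 := by
      rw [← (Nat.Coprime.pow_right k hn)]; exact Nat.dvd_gcd h1 h2
    exact AddMonoid.addOrderOf_eq_one_iff.1 (Nat.dvd_one.1 h3)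
  have h2 := hcop 2 (by norm_num)
  have h5 := hcop 5 (by norm_num)
  refine ⟨fun x => ?_, fun U hU => ?_⟩
  · have := three_smul hN h2 h5 (Additive.ofMul x)
    exact_mod_cast this
  · obtain ⟨W, hW, h1, h2⟩ := exists_compl hN h2 h5 (Subgroup.toAddSubgroup U) hU
    refine ⟨Subgroup.toAddSubgroup.symm W, hW, ?_, ?_⟩
    · apply Subgroup.toAddSubgroup.injective
      rw [map_inf, OrderIso.apply_symm_apply, h1, map_bot]
    · apply Subgroup.toAddSubgroup.injective
      rw [map_sup, OrderIso.apply_symm_apply, h2, map_top]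
end

section
/- There exists a finite-dimensional vector space W over ZMod 3 with a ZMod 3-linear action of Y = alternatingGroup (Fin 5), together with a Y-invariant subspace U of W, such that: U is Y-equivariantly isomorphic to the deleted permutation module V over ZMod 3; the quotient W ⧸ U is one-dimensional with trivial Y-action; and U has no Y-invariant direct complement in W. In other words, over ZMod 3 there is a non-split extension of the trivial one-dimensional Alt(5)-module by V, so Ext¹_{Alt(5)}(triv, V) ≠ 0. -/
/-- The deleted permutation module: functions `Fin 5 → ZMod r` summing to zero. -/
def V (r : ℕ) : Submodule (ZMod r) (Fin 5 → ZMod r) where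
  carrier := {f | ∑ i, f i = 0}
  add_mem' := by
    intro a b ha hb
    simp only [Set.mem_setOf_eq, Pi.add_apply, Finset.sum_add_distrib] at *
    rw [ha, hb, add_zero]
  zero_mem' := by simp
  smul_mem' := by
    intro c f hf
    simp only [Set.mem_setOf_eq, Pi.smul_apply, smul_eq_mul, ← Finset.mul_sum] at *
    rw [hf, mul_zero]

/-- The permutation action of `Equiv.Perm (Fin 5)` on `V r`, given by `σ • f = f ∘ σ⁻¹`. -/
def rho (r : ℕ) : Representation (ZMod r) (Equiv.Perm (Fin 5)) (V r) where
  toFun σ :=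
    { toFun := fun f => ⟨fun i => (f : Fin 5 → ZMod r) (σ⁻¹ i),
        (Equiv.sum_comp σ⁻¹ (f : Fin 5 → ZMod r)).trans f.2⟩
      map_add' := fun _ _ => rfl
      map_smul' := fun _ _ => rfl }
  map_one' := rfl
  map_mul' := fun _ _ => rfl

/-- Labels of the three perfect matchings of the complement of a point, read off from the
shifted sum of a pair. -/
def matchLabel (s : Fin 5) : ZMod 3 :=
  if s = 0 then 2 else if s = 1 ∨ s = 4 then 1 else 0

/-- Label of the matching of the complement of `i` that contains the pair `{j, k}`. -/
def pairLabel (i j k : Fin 5) : ZMod 3 := matchLabel (j + k + 3 * i)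

/-- The rotation of labels at the base point `i` caused by `σ`. -/
def rot (σ : Equiv.Perm (Fin 5)) (i : Fin 5) : ZMod 3 :=
  pairLabel (σ i) (σ (i + 1)) (σ (i + 2)) - pairLabel i (i + 1) (i + 2)

/-- `σ` acts affinely on labels, with slope `e` and translation part `rot σ`. -/
def RotSpec (σ : Equiv.Perm (Fin 5)) (e : ZMod 3) : Prop :=
  (∀ i j k : Fin 5, i ≠ j → i ≠ k → j ≠ k →
      pairLabel (σ i) (σ j) (σ k) = e * pairLabel i j k + rot σ i) ∧
    ∑ i, rot σ i = (1 - e) * 1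

instance (σ : Equiv.Perm (Fin 5)) (e : ZMod 3) : Decidable (RotSpec σ e) := by
  unfold RotSpec
  infer_instance

theorem rotSpec_swap : ∀ a b : Fin 5, a ≠ b → RotSpec (Equiv.swap a b) (-1) := by
  decide +kernel

theorem shift_ne : ∀ i : Fin 5, i ≠ i + 1 ∧ i ≠ i + 2 ∧ i + 1 ≠ i + 2 := by decide

theorem pairLabel_shift : ∀ i : Fin 5, pairLabel i (i + 1) (i + 2) = 0 := by decide

theorem RotSpec.rot_mul {σ : Equiv.Perm (Fin 5)} {e : ZMod 3} (hσ : RotSpec σ e)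
    (τ : Equiv.Perm (Fin 5)) (i : Fin 5) : rot (σ * τ) i = e * rot τ i + rot σ (τ i) := by
  obtain ⟨a, b, c⟩ := shift_ne i
  have h := hσ.1 (τ i) (τ (i + 1)) (τ (i + 2))
    (τ.injective.ne a) (τ.injective.ne b) (τ.injective.ne c)
  have h1 : rot (σ * τ) i = pairLabel (σ (τ i)) (σ (τ (i + 1))) (σ (τ (i + 2))) := by
    simp [rot, pairLabel_shift]
  have h2 : rot τ i = pairLabel (τ i) (τ (i + 1)) (τ (i + 2)) := by
    simp [rot, pairLabel_shift]
  rw [h1, h2, h]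

theorem RotSpec.mul {σ τ : Equiv.Perm (Fin 5)} {e f : ZMod 3} (hσ : RotSpec σ e)
    (hτ : RotSpec τ f) : RotSpec (σ * τ) (e * f) := by
  refine ⟨fun i j k hij hik hjk => ?_, ?_⟩
  · rw [hσ.rot_mul]
    simp only [Equiv.Perm.mul_apply]
    rw [hσ.1 _ _ _ (τ.injective.ne hij) (τ.injective.ne hik) (τ.injective.ne hjk),
      hτ.1 _ _ _ hij hik hjk]
    ring
  · simp only [hσ.rot_mul, Finset.sum_add_distrib, ← Finset.mul_sum]
    rw [Equiv.sum_comp τ (rot σ), hσ.2, hτ.2]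
    ring

theorem rotSpec_sign (σ : Equiv.Perm (Fin 5)) :
    RotSpec σ (((Equiv.Perm.sign σ : ℤˣ) : ℤ) : ZMod 3) := by
  induction σ using Equiv.Perm.swap_induction_on with
  | one => simp [RotSpec, rot]
  | swap_mul f x y hxy ih =>
    have h := (rotSpec_swap x y hxy).mul ih
    simpa [Equiv.Perm.sign_mul, Equiv.Perm.sign_swap hxy] using h

theorem rotSpec_even (σ : Equiv.Perm (Fin 5)) (hσ : Equiv.Perm.sign σ = 1) : RotSpec σ 1 := by
  simpa [hσ] using rotSpec_sign σ

theorem rot_sum (σ : Equiv.Perm (Fin 5)) (hσ : Equiv.Perm.sign σ = 1) : ∑ i, rot σ i = 0 := by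
  simpa using (rotSpec_even σ hσ).2

theorem rot_mul (σ τ : Equiv.Perm (Fin 5)) (hσ : Equiv.Perm.sign σ = 1) (i : Fin 5) :
    rot (σ * τ) i = rot τ i + rot σ (τ i) := by
  simpa using (rotSpec_even σ hσ).rot_mul τ i

/-- The cocycle of `Alt(5)` with values in `V 3`. -/
def coc (σ : alternatingGroup (Fin 5)) : V 3 :=
  ⟨fun i => rot σ.1 (σ.1⁻¹ i),
    (Equiv.sum_comp σ.1⁻¹ (rot σ.1)).trans (rot_sum σ.1 (Equiv.Perm.mem_alternatingGroup.1 σ.2))⟩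

theorem coc_mul (σ τ : alternatingGroup (Fin 5)) :
    coc (σ * τ) = rho 3 (σ : Equiv.Perm (Fin 5)) (coc τ) + coc σ := by
  apply Subtype.ext
  funext i
  change rot (σ.1 * τ.1) ((σ.1 * τ.1)⁻¹ i) = rot τ.1 (τ.1⁻¹ (σ.1⁻¹ i)) + rot σ.1 (σ.1⁻¹ i)
  rw [rot_mul _ _ (Equiv.Perm.mem_alternatingGroup.1 σ.2)]
  simp

theorem coc_one : coc 1 = 0 := by
  have h := coc_mul 1 1
  simpa using h

/-- The extension of the trivial module by `V 3` defined by `coc`. -/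
def extRep : Representation (ZMod 3) (alternatingGroup (Fin 5)) (V 3 × ZMod 3) where
  toFun σ :=
    { toFun := fun x => (rho 3 (σ : Equiv.Perm (Fin 5)) x.1 + x.2 • coc σ, x.2)
      map_add' := fun x y => by
        ext1
        · simp only [Prod.fst_add, Prod.snd_add, map_add, add_smul]
          abel
        · rfl
      map_smul' := fun a x => by
        ext1
        · simp [smul_smul]
        · rfl }
  map_one' := by
    apply LinearMap.ext
    intro x
    change (rho 3 ((1 : alternatingGroup (Fin 5)) : Equiv.Perm (Fin 5)) x.1
      + x.2 • coc 1, x.2) = x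
    simp [coc_one]
  map_mul' σ τ := by
    apply LinearMap.ext
    intro x
    change (rho 3 ((σ * τ : alternatingGroup (Fin 5)) : Equiv.Perm (Fin 5)) x.1
      + x.2 • coc (σ * τ), x.2) = (rho 3 (σ : Equiv.Perm (Fin 5))
        (rho 3 (τ : Equiv.Perm (Fin 5)) x.1 + x.2 • coc τ) + x.2 • coc σ, x.2)
    ext1
    · simp only [coc_mul, map_add, map_smul, smul_add, Subgroup.coe_mul, map_mul,
        Module.End.mul_apply, add_assoc]
    · rfl

theorem extRep_apply (σ : alternatingGroup (Fin 5)) (x : V 3 × ZMod 3) :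
    extRep σ x = (rho 3 (σ : Equiv.Perm (Fin 5)) x.1 + x.2 • coc σ, x.2) := rfl

/-- The three-cycle `(2 3 4)`. -/
def cyc : alternatingGroup (Fin 5) :=
  ⟨Equiv.swap 2 3 * Equiv.swap 3 4, by rw [Equiv.Perm.mem_alternatingGroup]; decide⟩

/-- Over `ZMod 3` there is a non-split extension of the trivial one-dimensional
`Alt(5)`-module by the deleted permutation module `V`: there is a finite-dimensional
`ZMod 3`-vector space `W` with an `Alt(5)`-action, and an invariant subspace `U`
equivariantly isomorphic to `V`, such that `W ⧸ U` is one-dimensional with trivial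
action, and `U` has no invariant direct complement in `W`.
Hence `Ext¹_{Alt(5)}(triv, V) ≠ 0` over `ZMod 3`. -/
theorem exists_nonsplit_extension_of_trivial_by_V_mod_three :
    ∃ (W : Type) (_ : AddCommGroup W) (_ : Module (ZMod 3) W) (_ : Module.Finite (ZMod 3) W)
      (ρ : Representation (ZMod 3) (alternatingGroup (Fin 5)) W)
      (U : Submodule (ZMod 3) W),
      (∀ σ : alternatingGroup (Fin 5), ∀ x ∈ U, ρ σ x ∈ U) ∧
      (∃ e : U ≃ₗ[ZMod 3] V 3,
        ∀ σ : alternatingGroup (Fin 5), ∀ x y : U, (x : W) = ρ σ y →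
          e x = rho 3 (σ : Equiv.Perm (Fin 5)) (e y)) ∧
      Module.finrank (ZMod 3) (W ⧸ U) = 1 ∧
      (∀ σ : alternatingGroup (Fin 5), ∀ x : W, ρ σ x - x ∈ U) ∧
      ¬ ∃ U' : Submodule (ZMod 3) W,
          (∀ σ : alternatingGroup (Fin 5), ∀ x ∈ U', ρ σ x ∈ U') ∧ IsCompl U U' := by
  refine ⟨V 3 × ZMod 3, inferInstance, inferInstance, inferInstance, extRep,
    LinearMap.ker (LinearMap.snd (ZMod 3) (V 3) (ZMod 3)), ?_, ?_, ?_, ?_, ?_⟩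
  · intro σ x hx
    exact hx
  · refine ⟨LinearEquiv.ofLinearMap
      ((LinearMap.fst (ZMod 3) (V 3) (ZMod 3)).comp (Submodule.subtype _))
      ((LinearMap.inl (ZMod 3) (V 3) (ZMod 3)).codRestrict _ (fun v => rfl)) ?_ ?_, ?_⟩
    · apply LinearMap.ext
      intro v
      rfl
    · apply LinearMap.ext
      rintro ⟨⟨v, t⟩, h⟩
      have ht : t = 0 := h
      subst ht
      rfl
    · rintro σ ⟨x, hx⟩ ⟨⟨v, t⟩, hy⟩ h
      have ht : t = 0 := hy
      subst ht
      have h' : x = _ := h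
      subst h'
      change rho 3 (σ : Equiv.Perm (Fin 5)) v + (0 : ZMod 3) • coc σ = _
      rw [zero_smul, add_zero]
      rfl
  · rw [((LinearMap.snd (ZMod 3) (V 3) (ZMod 3)).quotKerEquivOfSurjective
      LinearMap.snd_surjective).finrank_eq]
    exact Module.finrank_self _
  · intro σ x
    rw [LinearMap.mem_ker, extRep_apply]
    simp
  · rintro ⟨U', hU', hc⟩
    have htop : ((0, 1) : V 3 × ZMod 3) ∈
        LinearMap.ker (LinearMap.snd (ZMod 3) (V 3) (ZMod 3)) ⊔ U' := by
      rw [hc.sup_eq_top]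
      trivial
    obtain ⟨u, hu, w, hw, huw⟩ := Submodule.mem_sup.1 htop
    have hu2 : u.2 = 0 := hu
    have hw2 : w.2 = 1 := by
      have := congrArg Prod.snd huw
      simpa [hu2] using this
    have hz : extRep cyc w - w = 0 := by
      have : extRep cyc w - w ∈ LinearMap.ker (LinearMap.snd (ZMod 3) (V 3) (ZMod 3)) ⊓ U' := by
        refine ⟨?_, U'.sub_mem (hU' _ _ hw) hw⟩
        rw [SetLike.mem_coe, LinearMap.mem_ker, extRep_apply]
        simp
      rw [hc.inf_eq_bot] at this
      exact this
    have h1 : rho 3 (cyc : Equiv.Perm (Fin 5)) w.1 + w.2 • coc cyc = w.1 :=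
      congrArg Prod.fst (sub_eq_zero.1 hz)
    rw [hw2, one_smul] at h1
    have h2 : w.1.1 (cyc.1⁻¹ 0) + rot cyc.1 (cyc.1⁻¹ 0) = w.1.1 0 :=
      congrFun (congrArg Subtype.val h1) 0
    have h3 : cyc.1⁻¹ 0 = 0 := by decide
    rw [h3] at h2
    have h4 : rot cyc.1 0 = 0 := by simpa using h2
    revert h4
    decide
end
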